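/- arXiv:2312.01551 — 4 statements merged into one kernel-verified Lean document; each statement's English description precedes it below -/
import Mathlib

section
/- Let F be a field of characteristic zero, and let N_1 and N_2 be nilpotent endomorphisms of F-vector spaces V and W of dimensions n and m respectively, each consisting of a single Jordan block (i.e. N_1^{n-1} ≠ 0 and N_2^{m-1} ≠ 0). Then the nilpotent endomorphism N_1 ⊗ 1 + 1 ⊗ N_2 of V ⊗ W has Jordan type [n+m−1, n+m−3, ..., n+m+1−2·min(n,m)]; equivalently, V ⊗ W decomposes as a direct sum over k = 1, ..., min(n,m) of single Jordan blocks of sizes n+m+1−2k. -/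
/-!
The proof is the Clebsch–Gordan decomposition for `sl₂`. A single Jordan block `f` of size `d + 1` is
the lowering operator of the irreducible representation of highest weight `d`, so there are operators
`H`, `E` with `[E, f] = H` and `[H, f] = -2 f` (`cg_exists_sl2`). Adding the two actions gives
operators `H`, `E` on `V ⊗ W` satisfying the same relations with `T = f ⊗ 1 + 1 ⊗ g`.

Write `n = a + 1`, `m = b + 1`. For each `k ≤ min a b` an explicit combination of the tensors
`f ^ i v ⊗ g ^ (k - i) w` is a primitive vector `u k` (killed by `E`) of weight `a + b - 2k`
(`cg_exists_primitive`), and it generates a `T`-chain of length exactly `a + b - 2k + 1`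
(`cg_chain`). The span of this chain is the `k`-th summand. The summands are independent because they
lie in eigenspaces of the Casimir operator `H² + 2H + 4TE` for distinct eigenvalues (`cg_casimir`;
distinctness uses characteristic zero), and their dimensions add up to `n m` (`cg_sum`), so they fill
`V ⊗ W`.

The triples are handled through their relations only, since Mathlib's `IsSl2Triple` requires `H ≠ 0`,
which fails when `n = m = 1`.
-/

open scoped TensorProduct

/-- If `A ^ d` does not kill `v` but `A ^ (d + 1)` does, then `v, A v, …, A ^ d v` are linearly
independent. -/
theorem cg_linearIndependent {F V : Type*} [Field F] [AddCommGroup V] [Module F V]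
    (A : Module.End F V) (v : V) (d : ℕ) (h1 : (A ^ d) v ≠ 0) (h2 : (A ^ (d + 1)) v = 0) :
    LinearIndependent F (fun i : Fin (d + 1) => (A ^ (i : ℕ)) v) := by
  have hz : ∀ j, d < j → (A ^ j) v = 0 := by
    intro j hj
    obtain ⟨t, rfl⟩ := Nat.exists_eq_add_of_lt hj
    rw [show d + t + 1 = t + (d + 1) by ring, pow_add, Module.End.mul_apply, h2, map_zero]
  rw [Fintype.linearIndependent_iff]
  intro c hc
  suffices h : ∀ k : ℕ, ∀ hk : k < d + 1, c ⟨k, hk⟩ = 0 from fun i => h i i.2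
  intro k
  induction k using Nat.strong_induction_on with
  | _ k ih =>
    intro hk
    -- `A ^ (d - k)` kills the terms beyond the `k`-th; those before it vanish by induction.
    have h := congrArg (A ^ (d - k)) hc
    rw [map_sum, map_zero, Finset.sum_eq_single (⟨k, hk⟩ : Fin (d + 1))] at h
    · rw [map_smul, ← Module.End.mul_apply, ← pow_add, Nat.sub_add_cancel (by lia)] at h
      exact (smul_eq_zero.mp h).resolve_right h1
    · rintro ⟨j, hj⟩ - hne
      have hne' : j ≠ k := fun e => hne (by simp [e])
      rcases lt_or_gt_of_ne hne' with hl | hl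
      · rw [ih j hl hj, zero_smul, map_zero]
      · rw [map_smul, ← Module.End.mul_apply, ← pow_add, hz _ (by simp only; lia), smul_zero]
    · simp

/-- A single nilpotent Jordan block `f` of size `d + 1` is the lowering operator of the irreducible
`sl₂`-representation of highest weight `d`: on the Jordan chain `v i`, extended by zero past
`i = d`, the weight operator is `H` and the raising operator is `E`. -/
theorem cg_exists_sl2 {F V : Type*} [Field F] [AddCommGroup V] [Module F V]
    [FiniteDimensional F V] (f : Module.End F V) (d : ℕ) (hV : Module.finrank F V = d + 1)
    (hnil : IsNilpotent f) (hf : f ^ d ≠ 0) :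
    ∃ (v : ℕ → V) (H E : Module.End F V), v d ≠ 0 ∧ (∀ i, d < i → v i = 0) ∧
      (∀ i, (f ^ i) (v 0) = v i) ∧
      (∀ i, H (v i) = ((d : F) - 2 * i) • v i) ∧
      (∀ i, E (v i) = ((i : F) * (d + 1 - i)) • v (i - 1)) ∧
      E * f = f * E + H ∧ H * f = f * H - (2 : F) • f := by
  have hpow : f ^ (d + 1) = 0 := by
    have h := LinearMap.aeval_self_charpoly f
    rw [hnil.charpoly_eq_X_pow_finrank, hV] at h
    simpa using h
  obtain ⟨v, hv⟩ : ∃ v, (f ^ d) v ≠ 0 := by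
    by_contra! h
    exact hf (LinearMap.ext h)
  have hli := cg_linearIndependent f v d hv (by rw [hpow]; rfl)
  let b := basisOfLinearIndependentOfCardEqFinrank hli (by simp [hV])
  have hb : ∀ i : Fin (d + 1), b i = (f ^ (i : ℕ)) v := by
    intro i
    simp [b]
  have hz : ∀ j, d < j → (f ^ j) v = 0 := by
    intro j hj
    rw [pow_eq_zero_of_le hj hpow]
    rfl
  let H : Module.End F V := b.constr F (fun i => ((d : F) - 2 * ((i : ℕ) : F)) • (f ^ (i : ℕ)) v)
  let E : Module.End F V := b.constr F
    (fun i => (((i : ℕ) : F) * (d + 1 - ((i : ℕ) : F))) • (f ^ ((i : ℕ) - 1)) v)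
  have hH : ∀ i : ℕ, H ((f ^ i) v) = ((d : F) - 2 * i) • (f ^ i) v := by
    intro i
    by_cases hi : i < d + 1
    · have := b.constr_basis F
        (fun i => ((d : F) - 2 * ((i : ℕ) : F)) • (f ^ (i : ℕ)) v) ⟨i, hi⟩
      rwa [hb] at this
    · rw [hz i (by lia), map_zero, smul_zero]
  have hE : ∀ i : ℕ, E ((f ^ i) v) = ((i : F) * (d + 1 - i)) • (f ^ (i - 1)) v := by
    intro i
    by_cases hi : i < d + 1
    · have := b.constr_basis F
        (fun i => (((i : ℕ) : F) * (d + 1 - ((i : ℕ) : F))) • (f ^ ((i : ℕ) - 1)) v) ⟨i, hi⟩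
      rwa [hb] at this
    · rw [hz i (by lia), map_zero]
      rcases eq_or_ne i (d + 1) with rfl | hne
      · simp
      · rw [hz (i - 1) (by lia), smul_zero]
  have hs : ∀ i : ℕ, f ((f ^ i) v) = (f ^ (i + 1)) v := by
    intro i
    rw [pow_succ', Module.End.mul_apply]
  refine ⟨fun i => (f ^ i) v, H, E, hv, hz, by simp, hH, hE, ?_, ?_⟩
  · refine b.ext fun i => ?_
    rw [hb]
    obtain ⟨i, -⟩ := i
    simp only [Module.End.mul_apply, LinearMap.add_apply, hs, hE, hH, map_smul]
    cases i with
    | zero => simp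
    | succ i =>
      simp only [Nat.add_sub_cancel, ← add_smul]
      congr 1
      push_cast
      ring
  · refine b.ext fun i => ?_
    rw [hb]
    obtain ⟨i, -⟩ := i
    simp only [Module.End.mul_apply, LinearMap.sub_apply, LinearMap.smul_apply, hs, hH, map_smul,
      ← sub_smul]
    congr 1
    push_cast
    ring

theorem cg_H_pow {F M : Type*} [Field F] [AddCommGroup M] [Module F M]
    (T H : Module.End F M) (hHT : H * T = T * H - (2 : F) • T)
    (u : M) (μ : F) (hHu : H u = μ • u) (j : ℕ) :
    H ((T ^ j) u) = (μ - 2 * j) • (T ^ j) u := by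
  induction j with
  | zero => simpa using hHu
  | succ j ih =>
    have h := LinearMap.congr_fun hHT ((T ^ j) u)
    simp only [Module.End.mul_apply, LinearMap.sub_apply, LinearMap.smul_apply, ih, map_smul,
      ← sub_smul] at h
    rw [pow_succ', Module.End.mul_apply, h]
    congr 1
    push_cast
    ring

theorem cg_E_pow {F M : Type*} [Field F] [AddCommGroup M] [Module F M]
    (T H E : Module.End F M) (hET : E * T = T * E + H) (hHT : H * T = T * H - (2 : F) • T)
    (u : M) (μ : F) (hHu : H u = μ • u) (hEu : E u = 0) (j : ℕ) :
    E ((T ^ (j + 1)) u) = ((j + 1) * (μ - j)) • (T ^ j) u := by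
  induction j with
  | zero =>
    have h := LinearMap.congr_fun hET u
    simpa [hEu, hHu] using h
  | succ j ih =>
    have h := LinearMap.congr_fun hET ((T ^ (j + 1)) u)
    simp only [Module.End.mul_apply, LinearMap.add_apply, ih, map_smul,
      cg_H_pow T H hHT u μ hHu] at h
    rw [← Module.End.mul_apply T (T ^ j), ← pow_succ', ← add_smul] at h
    rw [pow_succ', Module.End.mul_apply, h]
    congr 1
    push_cast
    ring

/-- A primitive vector of weight `d` generates a `T`-chain of length exactly `d + 1`: by
`cg_E_pow`, `E` maps `T ^ (j + 1) u` to a nonzero multiple of `T ^ j u` unless `j = d`, so the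
chain can only break off there. -/
theorem cg_chain {F M : Type*} [Field F] [CharZero F] [AddCommGroup M] [Module F M]
    (T H E : Module.End F M) (hT : IsNilpotent T)
    (hET : E * T = T * E + H) (hHT : H * T = T * H - (2 : F) • T)
    (u : M) (d : ℕ) (hu : u ≠ 0) (hHu : H u = (d : F) • u) (hEu : E u = 0) :
    (T ^ d) u ≠ 0 ∧ (T ^ (d + 1)) u = 0 := by
  classical
  obtain ⟨N, hN⟩ := hT
  have hex : ∃ j, (T ^ j) u = 0 := ⟨N, by rw [hN]; rfl⟩
  obtain ⟨i, hi⟩ : ∃ i, Nat.find hex = i + 1 := by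
    refine Nat.exists_eq_succ_of_ne_zero fun h0 => hu ?_
    have := Nat.find_spec hex
    rw [h0] at this
    simpa using this
  have h1 : (T ^ (i + 1)) u = 0 := hi ▸ Nat.find_spec hex
  have h2 : (T ^ i) u ≠ 0 := Nat.find_min hex (by lia)
  have h3 := cg_E_pow T H E hET hHT u d hHu hEu i
  rw [h1, map_zero, eq_comm, smul_eq_zero, or_iff_left h2, mul_eq_zero,
    or_iff_right (Nat.cast_add_one_ne_zero i), sub_eq_zero, Nat.cast_inj] at h3
  subst h3
  exact ⟨h2, h1⟩

/-- The Casimir operator `H² + 2H + 4TE` commutes with `T`, hence acts on the whole `T`-chain of a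
primitive vector of weight `μ` by the scalar `μ (μ + 2)`. -/
theorem cg_casimir {F M : Type*} [Field F] [AddCommGroup M] [Module F M]
    (T H E : Module.End F M) (hET : E * T = T * E + H) (hHT : H * T = T * H - (2 : F) • T)
    (u : M) (μ : F) (hHu : H u = μ • u) (hEu : E u = 0) (j : ℕ) :
    (H * H + (2 : F) • H + (4 : F) • (T * E)) ((T ^ j) u) = (μ * (μ + 2)) • (T ^ j) u := by
  simp only [LinearMap.add_apply, LinearMap.smul_apply, Module.End.mul_apply,
    cg_H_pow T H hHT u μ hHu, map_smul]
  cases j with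
  | zero =>
    simp only [pow_zero, Module.End.one_apply, hEu, map_zero, smul_zero, smul_smul, ← add_smul,
      add_zero]
    congr 1
    push_cast
    ring
  | succ j =>
    rw [cg_E_pow T H E hET hHT u μ hHu hEu, map_smul, ← Module.End.mul_apply T, ← pow_succ']
    simp only [smul_smul, ← add_smul]
    congr 1
    push_cast
    ring

/-- For `k ≤ a, b`, the degree `k` part of the tensor product of the irreducible representations of
highest weights `a` and `b` contains a primitive vector, of weight `a + b - 2k`. -/
theorem cg_exists_primitive {F V W : Type*} [Field F] [CharZero F]
    [AddCommGroup V] [Module F V] [AddCommGroup W] [Module F W]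
    (a b k : ℕ) (hka : k ≤ a) (hkb : k ≤ b)
    (f H₁ E₁ : Module.End F V) (H₂ E₂ : Module.End F W) (v : ℕ → V) (w : ℕ → W)
    (hva : v a ≠ 0) (hv0 : ∀ i, a < i → v i = 0) (hfv : ∀ i, (f ^ i) (v 0) = v i)
    (hH₁ : ∀ i, H₁ (v i) = ((a : F) - 2 * i) • v i)
    (hE₁ : ∀ i, E₁ (v i) = ((i : F) * (a + 1 - i)) • v (i - 1))
    (hwk : w k ≠ 0)
    (hH₂ : ∀ i, H₂ (w i) = ((b : F) - 2 * i) • w i)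
    (hE₂ : ∀ i, E₂ (w i) = ((i : F) * (b + 1 - i)) • w (i - 1)) :
    ∃ u : TensorProduct F V W, u ≠ 0 ∧
      (TensorProduct.map H₁ LinearMap.id + TensorProduct.map LinearMap.id H₂ :
        Module.End F (TensorProduct F V W)) u = (((a + b - 2 * k : ℕ)) : F) • u ∧
      (TensorProduct.map E₁ LinearMap.id + TensorProduct.map LinearMap.id E₂ :
        Module.End F (TensorProduct F V W)) u = 0 := by
  -- The recursion is forced by `E u = 0`; its denominators do not vanish for `i < k ≤ a`.
  let c : ℕ → F := fun i => Nat.rec 1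
    (fun i x => -(x * (((k : F) - i) * (b + 1 - (k - i)))) / (((i : F) + 1) * (a - i))) i
  have hc0 : c 0 = 1 := rfl
  have hc : ∀ i, i < k →
      c (i + 1) * (((i : F) + 1) * (a - i)) + c i * (((k : F) - i) * (b + 1 - (k - i))) = 0 := by
    intro i hi
    have h1 : ((i : F) + 1) ≠ 0 := Nat.cast_add_one_ne_zero i
    have h2 : ((a : F) - i) ≠ 0 := by
      rw [sub_ne_zero]
      exact_mod_cast (by lia : a ≠ i)
    have h3 : c (i + 1) =
      -(c i * (((k : F) - i) * (b + 1 - (k - i)))) / (((i : F) + 1) * (a - i)) := rfl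
    rw [h3]
    field_simp
    ring
  refine ⟨∑ i ∈ Finset.range (k + 1), c i • (v i ⊗ₜ[F] w (k - i)), ?_, ?_, ?_⟩
  · intro h0
    -- `f ^ a ⊗ 1` kills every term except the one with `i = 0`.
    have h := congrArg (TensorProduct.map (f ^ a) LinearMap.id) h0
    rw [map_zero, map_sum, Finset.sum_eq_single 0] at h
    · rw [hc0, one_smul, TensorProduct.map_tmul, hfv, LinearMap.id_apply, Nat.sub_zero] at h
      -- Over a field, nonzero vectors are detected by functionals.
      obtain ⟨φ, hφ⟩ : ∃ φ : Module.Dual F V, φ (v a) ≠ 0 := by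
        by_contra! h'
        exact hva ((Module.forall_dual_apply_eq_zero_iff F _).mp h')
      obtain ⟨ψ, hψ⟩ : ∃ ψ : Module.Dual F W, ψ (w k) ≠ 0 := by
        by_contra! h'
        exact hwk ((Module.forall_dual_apply_eq_zero_iff F _).mp h')
      have h' := congrArg ((TensorProduct.lid F F).toLinearMap ∘ₗ TensorProduct.map φ ψ) h
      simp [hφ, hψ] at h'
    · intro i _ hi
      rw [map_smul, TensorProduct.map_tmul, ← hfv i, ← Module.End.mul_apply, ← pow_add, hfv, hv0 _ (by lia),
        TensorProduct.zero_tmul, smul_zero]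
    · simp
  · rw [map_sum, Finset.smul_sum]
    refine Finset.sum_congr rfl fun i hi => ?_
    have hi' : i ≤ k := by simpa [Nat.lt_succ_iff] using hi
    rw [map_smul, LinearMap.add_apply, TensorProduct.map_tmul, TensorProduct.map_tmul, hH₁, hH₂, LinearMap.id_apply,
      LinearMap.id_apply, ← TensorProduct.smul_tmul', TensorProduct.tmul_smul,
        ← add_smul, smul_comm]
    congr 2
    rw [Nat.cast_sub hi', Nat.cast_sub (by lia)]
    push_cast
    ring
  · have hterm : ∀ i, (TensorProduct.map E₁ LinearMap.id + TensorProduct.map LinearMap.id E₂ :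
        Module.End F (TensorProduct F V W)) (c i • (v i ⊗ₜ[F] w (k - i))) =
        (c i * ((i : F) * (a + 1 - i))) • (v (i - 1) ⊗ₜ[F] w (k - i)) +
        (c i * (((k - i : ℕ) : F) * (b + 1 - (k - i : ℕ)))) • (v i ⊗ₜ[F] w (k - i - 1)) := by
      intro i
      rw [map_smul, LinearMap.add_apply, TensorProduct.map_tmul, TensorProduct.map_tmul, hE₁, hE₂, LinearMap.id_apply,
        LinearMap.id_apply, ← TensorProduct.smul_tmul', TensorProduct.tmul_smul,
        smul_add, smul_smul, smul_smul]
    rw [map_sum, Finset.sum_congr rfl fun i _ => hterm i, Finset.sum_add_distrib,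
      Finset.sum_range_succ', Finset.sum_range_succ (fun i => (c i * (((k - i : ℕ) : F) * _)) • _)]
    simp only [Nat.cast_zero, zero_mul, mul_zero, zero_smul, add_zero, Nat.sub_self]
    rw [← Finset.sum_add_distrib]
    refine Finset.sum_eq_zero fun i hi => ?_
    have hi' : i < k := by simpa using hi
    rw [Nat.add_sub_cancel, ← Nat.sub_sub, ← add_smul, Nat.cast_sub hi'.le]
    convert zero_smul F _
    rw [← hc i hi']
    push_cast
    ring

theorem cg_sum (n m : ℕ) :
    ∑ k : Fin (min n m), (n + m - 1 - 2 * (k : ℕ)) = n * m := by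
  rw [Fin.sum_univ_eq_sum_range (fun k => n + m - 1 - 2 * k)]
  have h : ∀ t, t ≤ min n m →
      ((∑ k ∈ Finset.range t, (n + m - 1 - 2 * k) : ℕ) : ℤ) = t * (n + m - t) := by
    intro t
    induction t with
    | zero => simp
    | succ t ih =>
      intro ht
      rw [Finset.sum_range_succ, Nat.cast_add, ih (by lia), Nat.cast_sub (by lia),
        Nat.cast_sub (by lia)]
      push_cast
      ring
  zify
  have := h _ le_rfl
  push_cast at this
  rw [this]
  rcases le_total n m with h | h
  · rw [min_eq_left (by exact_mod_cast h)]; ring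
  · rw [min_eq_right (by exact_mod_cast h)]; ring

/-- An independent family of subspaces whose dimensions add up to that of the whole space is an
internal direct sum decomposition. -/
theorem cg_isInternal {F M ι : Type*} [Field F] [AddCommGroup M] [Module F M]
    [FiniteDimensional F M] [Fintype ι] [DecidableEq ι] (p : ι → Submodule F M)
    (hind : iSupIndep p) (hsum : ∑ i, Module.finrank F (p i) = Module.finrank F M) :
    DirectSum.IsInternal p := by
  have hinj : Function.Injective (DirectSum.coeLinearMap p) := hind.dfinsupp_lsum_injective
  have hfr : Module.finrank F (LinearMap.range (DirectSum.coeLinearMap p)) =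
      Module.finrank F M := by
    rw [LinearMap.finrank_range_of_inj hinj, Module.finrank_directSum, hsum]
  refine ⟨hinj, ?_⟩
  change Function.Surjective (DirectSum.coeLinearMap p)
  exact LinearMap.range_eq_top.mp (Submodule.eq_top_of_finrank_eq hfr)


/-- Tensor product of two single Jordan blocks (Clebsch–Gordan):
if `f`, `g` are nilpotent endomorphisms of `F`-vector spaces `V`, `W` of
dimensions `n`, `m` consisting of a single Jordan block (`f^(n-1) ≠ 0`,
`g^(m-1) ≠ 0`), then `T = f ⊗ 1 + 1 ⊗ g` is nilpotent and `V ⊗ W` is an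
internal direct sum of `min n m` `T`-invariant subspaces, the `k`-th one
(`k = 0, …, min n m - 1`) of dimension `n + m - 1 - 2k` on which `T`
restricts to a single Jordan block. -/
theorem stmt_4 (F : Type) [Field F] [CharZero F]
    (V W : Type) [AddCommGroup V] [Module F V] [AddCommGroup W] [Module F W]
    [FiniteDimensional F V] [FiniteDimensional F W]
    (n m : ℕ) (hn : 0 < n) (hm : 0 < m)
    (hV : Module.finrank F V = n) (hW : Module.finrank F W = m)
    (f : V →ₗ[F] V) (g : W →ₗ[F] W)
    (hfnil : IsNilpotent f) (hgnil : IsNilpotent g)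
    (hf : f ^ (n - 1) ≠ 0) (hg : g ^ (m - 1) ≠ 0)
    (T : TensorProduct F V W →ₗ[F] TensorProduct F V W)
    (hT : T = TensorProduct.map f LinearMap.id + TensorProduct.map LinearMap.id g) :
    IsNilpotent T ∧
    ∃ (p : Fin (min n m) → Submodule F (TensorProduct F V W))
      (hstab : ∀ k, ∀ x ∈ p k, T x ∈ p k),
      DirectSum.IsInternal p ∧
      (∀ k : Fin (min n m), Module.finrank F (p k) = n + m - 1 - 2 * (k : ℕ)) ∧
      (∀ k : Fin (min n m), (T.restrict (hstab k)) ^ (n + m - 2 - 2 * (k : ℕ)) ≠ 0) := by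
  classical
  obtain ⟨a, rfl⟩ : ∃ a, n = a + 1 := ⟨n - 1, by lia⟩
  obtain ⟨b, rfl⟩ : ∃ b, m = b + 1 := ⟨m - 1, by lia⟩
  have hTnil : IsNilpotent T := by
    have hcomm : Commute (TensorProduct.map f (LinearMap.id : W →ₗ[F] W))
        (TensorProduct.map (LinearMap.id : V →ₗ[F] V) g) := by
      refine TensorProduct.ext' fun x y => ?_
      simp
    have hpl : ∀ j, TensorProduct.map f (LinearMap.id : W →ₗ[F] W) ^ j =
        TensorProduct.map (f ^ j) LinearMap.id := fun j => by
      rw [TensorProduct.map_pow]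
      congr 1
      exact one_pow j
    have hpr : ∀ j, TensorProduct.map (LinearMap.id : V →ₗ[F] V) g ^ j =
        TensorProduct.map LinearMap.id (g ^ j) := fun j => by
      rw [TensorProduct.map_pow]
      congr 1
      exact one_pow j
    rw [hT]
    refine hcomm.isNilpotent_add ?_ ?_
    · obtain ⟨N, hN⟩ := hfnil
      exact ⟨N, by rw [hpl, hN, TensorProduct.map_zero_left]⟩
    · obtain ⟨N, hN⟩ := hgnil
      exact ⟨N, by rw [hpr, hN, TensorProduct.map_zero_right]⟩
  refine ⟨hTnil, ?_⟩
  obtain ⟨v, H₁, E₁, hva, hv0, hfv, hH₁, hE₁, hEf, hHf⟩ := cg_exists_sl2 f a hV hfnil hf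
  obtain ⟨w, H₂, E₂, hwb, hw0, hgw, hH₂, hE₂, hEg, hHg⟩ := cg_exists_sl2 g b hW hgnil hg
  have hwk : ∀ k ≤ b, w k ≠ 0 := by
    intro k hk h0
    apply hwb
    rw [← hgw, show b = (b - k) + k by lia, pow_add, Module.End.mul_apply, hgw k, h0, map_zero]
  let H : Module.End F (TensorProduct F V W) :=
    TensorProduct.map H₁ LinearMap.id + TensorProduct.map LinearMap.id H₂
  let E : Module.End F (TensorProduct F V W) :=
    TensorProduct.map E₁ LinearMap.id + TensorProduct.map LinearMap.id E₂
  have hET : E * T = T * E + H := by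
    refine TensorProduct.ext' fun x y => ?_
    have h1 := LinearMap.congr_fun hEf x
    have h2 := LinearMap.congr_fun hEg y
    simp only [Module.End.mul_apply, LinearMap.add_apply] at h1 h2
    simp only [hT, E, H, Module.End.mul_apply, LinearMap.add_apply, TensorProduct.map_tmul,
      LinearMap.id_apply, map_add, h1, h2, TensorProduct.add_tmul, TensorProduct.tmul_add]
    abel
  have hHT : H * T = T * H - (2 : F) • T := by
    refine TensorProduct.ext' fun x y => ?_
    have h1 := LinearMap.congr_fun hHf x
    have h2 := LinearMap.congr_fun hHg y
    simp only [Module.End.mul_apply, LinearMap.sub_apply, LinearMap.smul_apply] at h1 h2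
    simp only [hT, H, Module.End.mul_apply, LinearMap.add_apply, TensorProduct.map_tmul,
      LinearMap.sub_apply, LinearMap.smul_apply,
      LinearMap.id_apply, map_add, h1, h2, TensorProduct.sub_tmul, TensorProduct.tmul_sub,
      TensorProduct.tmul_smul, TensorProduct.smul_tmul', smul_add]
    abel
  have hprim : ∀ k : Fin (min (a + 1) (b + 1)), ∃ u : TensorProduct F V W, u ≠ 0 ∧
      H u = ((a + b - 2 * (k : ℕ) : ℕ) : F) • u ∧ E u = 0 := fun k =>
    cg_exists_primitive a b k (by lia) (by lia) f H₁ E₁ H₂ E₂ v w hva hv0 hfv hH₁ hE₁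
      (hwk k (by lia)) hH₂ hE₂
  choose u hu0 hHu hEu using hprim
  have hchain := fun k => cg_chain T H E hTnil hET hHT (u k) _ (hu0 k) (hHu k) (hEu k)
  let p : Fin (min (a + 1) (b + 1)) → Submodule F (TensorProduct F V W) := fun k =>
    Submodule.span F (Set.range fun j : Fin (a + b - 2 * (k : ℕ) + 1) => (T ^ (j : ℕ)) (u k))
  have hmem : ∀ k j, (T ^ j) (u k) ∈ p k := by
    intro k j
    by_cases hj : j < a + b - 2 * (k : ℕ) + 1
    · exact Submodule.subset_span ⟨⟨j, hj⟩, rfl⟩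
    · rw [show j = (j - (a + b - 2 * (k : ℕ) + 1)) + (a + b - 2 * (k : ℕ) + 1) by lia, pow_add,
        Module.End.mul_apply, (hchain k).2, map_zero]
      exact zero_mem _
  have hstab : ∀ k, ∀ x ∈ p k, T x ∈ p k := by
    intro k
    change p k ≤ (p k).comap T
    refine Submodule.span_le.mpr ?_
    rintro _ ⟨j, rfl⟩
    have := hmem k (j + 1)
    rwa [pow_succ', Module.End.mul_apply] at this
  have hdim : ∀ k : Fin (min (a + 1) (b + 1)),
      Module.finrank F (p k) = (a + 1) + (b + 1) - 1 - 2 * (k : ℕ) := by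
    intro k
    rw [finrank_span_eq_card (cg_linearIndependent T (u k) _ (hchain k).1 (hchain k).2),
      Fintype.card_fin]
    lia
  have hind : iSupIndep p := by
    -- The `k`-th chain lies in the Casimir eigenspace for `μ (μ + 2)`, `μ = a + b - 2k`, and these
    -- eigenvalues are pairwise distinct.
    let C : Module.End F (TensorProduct F V W) := H * H + (2 : F) • H + (4 : F) • (T * E)
    let e : Fin (min (a + 1) (b + 1)) → F := fun k =>
      ((a + b - 2 * (k : ℕ) : ℕ) : F) * (((a + b - 2 * (k : ℕ) : ℕ) : F) + 2)
    have he : Function.Injective e := by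
      intro k l hkl
      have h : (a + b - 2 * (k : ℕ)) * ((a + b - 2 * (k : ℕ)) + 2) =
          (a + b - 2 * (l : ℕ)) * ((a + b - 2 * (l : ℕ)) + 2) := by
        simp only [e] at hkl
        exact_mod_cast hkl
      have h' : a + b - 2 * (k : ℕ) = a + b - 2 * (l : ℕ) := by
        nlinarith
      exact Fin.ext (by lia)
    refine (C.eigenspaces_iSupIndep.comp he).mono fun k => Submodule.span_le.mpr ?_
    rintro _ ⟨j, rfl⟩
    exact Module.End.mem_eigenspace_iff.mpr
      (cg_casimir T H E hET hHT (u k) _ (hHu k) (hEu k) j)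
  refine ⟨p, hstab, ?_, hdim, ?_⟩
  · refine cg_isInternal p hind ?_
    rw [Module.finrank_tensorProduct, hV, hW, Finset.sum_congr rfl fun k _ => hdim k, cg_sum]
  · intro k h0
    have h := congrArg Subtype.val (LinearMap.congr_fun h0 ⟨u k, by simpa using hmem k 0⟩)
    rw [Module.End.pow_restrict] at h
    refine (hchain k).1 ?_
    rw [show a + b - 2 * (k : ℕ) = a + 1 + (b + 1) - 2 - 2 * (k : ℕ) by lia]
    simpa using h
end

section
/- Let R be a ring, let d be a nonnegative integer and q an integer, and let C be a bounded complex of R-modules such that H^i(C) = 0 for all i outside the interval [q, q+d]. If f : C → C is a morphism in the derived category (equivalently, a chain map considered up to homotopy) that induces the zero map on H^i(C) for every i, then f^{d+1} = 0 in the derived category. Consequently, for any commutative ring T acting on C through endomorphisms in the derived category, the kernel of the map from the image T(C) of T in End_{D(R)}(C) to End_R(H^*(C)) is a nilpotent ideal I with I^{d+1} = 0. -/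
/-!
Call an endomorphism of an object `X` of the derived category a *ghost* if it induces zero on all
cohomology objects. A morphism `A ⟶ B` with `A` in degrees `≤ m` and `B` in degrees `≥ m` is
determined by what it does on `Hᵐ` (`eq_zero_of_homologyMap_eq_zero`): it factors through
`τ_{≥m} A ⟶ τ_{≤m} B`, which is a morphism between two objects concentrated in degree `m`, and the
single functor in degree `m` is fully faithful. Hence, for a ghost `f : X ⟶ X`, the composite
`τ_{<m+1} X ⟶ X ⟶ X ⟶ τ_{≥m} X` vanishes, so that `f` carries `τ_{<m+1} X` into `τ_{<m} X`: every
ghost lowers the canonical filtration by one step. If the cohomology of `X` lies in `[q, q + d]`,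
this filtration has only `d + 1` steps, and so any composite of `d + 1` ghosts vanishes
(`prod_eq_zero`). Both assertions of the theorem are special cases.
-/

open CategoryTheory

open DerivedCategory DerivedCategory.TStructure Limits Pretriangulated Triangulated

universe w v u

namespace GhostLemma

variable {A : Type u} [Category.{v} A] [Abelian A] [HasDerivedCategory.{w} A]

/-- A morphism between objects concentrated in degree `m` is determined by its effect on `Hᵐ`,
since such objects lie in the image of the fully faithful single functor. -/
lemma eq_zero_of_concentrated {X Y : DerivedCategory A} (m : ℤ) [X.IsGE m] [X.IsLE m]
    [Y.IsGE m] [Y.IsLE m] (f : X ⟶ Y) (hf : (homologyFunctor A m).map f = 0) : f = 0 := by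
  obtain ⟨M, ⟨e⟩⟩ := exists_iso_singleFunctor_obj_of_isGE_of_isLE X m
  obtain ⟨N, ⟨e'⟩⟩ := exists_iso_singleFunctor_obj_of_isGE_of_isLE Y m
  obtain ⟨g, hg⟩ := (singleFunctor A m).map_surjective (e.inv ≫ f ≫ e'.hom)
  have hg0 : g = 0 := by
    have h := NatIso.naturality_1 (singleFunctorCompHomologyFunctorIso A m) g
    rw [Functor.comp_map, hg, Functor.map_comp, Functor.map_comp, hf, zero_comp, comp_zero,
      zero_comp, comp_zero] at h
    exact h.symm
  rw [hg0, Functor.map_zero] at hg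
  rw [← cancel_epi e.inv, ← cancel_mono e'.hom, Category.assoc, ← hg, comp_zero, zero_comp]

lemma epi_homologyMap_truncGEπ (X : DerivedCategory A) (m : ℤ) :
    Epi ((homologyFunctor A m).map ((t.truncGEπ m).app X)) := by
  have hT := t.triangleLTGE_distinguished m X
  refine (HomologySequence.epi_homologyMap_mor₂_iff _ hT m (m + 1)).2 ?_
  exact (isZero_of_isLE ((t.triangleLTGE m).obj X).obj₁ (m - 1) (m + 1) (by lia)).eq_of_tgt _ _

lemma mono_homologyMap_truncLTι (X : DerivedCategory A) (m : ℤ) :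
    Mono ((homologyFunctor A m).map ((t.truncLTι (m + 1)).app X)) := by
  have hT := t.triangleLTGE_distinguished (m + 1) X
  refine (HomologySequence.mono_homologyMap_mor₁_iff _ hT (m - 1) m).2 ?_
  exact (isZero_of_isGE ((t.triangleLTGE (m + 1)).obj X).obj₃ (m + 1) (m - 1)
    (by lia)).eq_of_src _ _

/-- Truncation reduces this to `eq_zero_of_concentrated`: `Hᵐ` sends `X ⟶ τ_{≥m} X` to an
epimorphism and `τ_{<m+1} Y ⟶ Y` to a monomorphism. -/
lemma eq_zero_of_homologyMap_eq_zero {X Y : DerivedCategory A} (m : ℤ) [X.IsLE m] [Y.IsGE m]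
    (f : X ⟶ Y) (hf : (homologyFunctor A m).map f = 0) : f = 0 := by
  have : ((t.truncGE m).obj X).IsLE m := inferInstance
  have : ((t.truncLT (m + 1)).obj Y).IsGE m := inferInstance
  have : ((t.truncLT (m + 1)).obj Y).IsLE m := t.isLE_truncLT_obj Y (m + 1) m
  have := epi_homologyMap_truncGEπ X m
  have := mono_homologyMap_truncLTι Y m
  obtain ⟨g, rfl⟩ := t.descTruncGE_aux f m
  obtain ⟨h, rfl⟩ := t.liftTruncLT_aux g m (m + 1) rfl
  rw [Functor.map_comp, Functor.map_comp] at hf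
  have hh : (homologyFunctor A m).map h = 0 := by
    rw [← cancel_epi ((homologyFunctor A m).map ((t.truncGEπ m).app X)),
      ← cancel_mono ((homologyFunctor A m).map ((t.truncLTι (m + 1)).app Y)),
      Category.assoc, hf, comp_zero, zero_comp]
  rw [eq_zero_of_concentrated m h hh, zero_comp, comp_zero]

/-- A ghost carries `τ_{<m+1} X` into `τ_{<m} X`. -/
lemma exists_factor_truncLT {X : DerivedCategory A} (f : X ⟶ X)
    (hf : ∀ i : ℤ, (homologyFunctor A i).map f = 0) (m : ℤ) :
    ∃ g : (t.truncLT (m + 1)).obj X ⟶ (t.truncLT m).obj X,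
      (t.truncLTι (m + 1)).app X ≫ f = g ≫ (t.truncLTι m).app X := by
  have : ((t.truncLT (m + 1)).obj X).IsLE m := t.isLE_truncLT_obj X (m + 1) m
  have h : (homologyFunctor A m).map
      ((t.truncLTι (m + 1)).app X ≫ f ≫ (t.truncGEπ m).app X) = 0 := by
    simp [hf]
  exact Triangle.coyoneda_exact₂ _ (t.triangleLTGE_distinguished m X)
    ((t.truncLTι (m + 1)).app X ≫ f)
    ((Category.assoc _ _ _).trans (eq_zero_of_homologyMap_eq_zero m _ h))

/-- Since `τ_{<q} X = 0`, a product of `n` ghosts, each lowering the filtration by one step, kills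
`τ_{<q+n} X`. -/
lemma truncLTι_comp_prod {X : DerivedCategory A} (q : ℤ) [X.IsGE q] (L : List (End X))
    (hL : ∀ f ∈ L, ∀ i : ℤ, (homologyFunctor A i).map f = 0) :
    (t.truncLTι (q + L.length)).app X ≫ L.prod = 0 := by
  -- `(L ++ [f]).prod` is `f` followed by `L.prod`, as multiplication in `End X` is composition
  -- of functions; so the induction has to peel off the last entry of the list.
  induction L using List.reverseRecOn with
  | nil =>
    refine (IsZero.eq_of_src ?_ _ _)
    simpa using t.isZero_truncLT_obj_of_isGE q X
  | append_singleton L f ih =>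
    have ih := ih fun g hg => hL g (by simp [hg])
    obtain ⟨g, hg⟩ := exists_factor_truncLT f (hL f (by simp)) (q + L.length)
    have hlen : q + ((L ++ [f]).length : ℤ) = q + L.length + 1 := by
      simp [add_assoc]
    rw [hlen, List.prod_append, List.prod_singleton, End.mul_def, ← Category.assoc, hg,
      Category.assoc, ih, comp_zero]

/-- The ghost lemma: on an object with cohomology in `[q, q + d]`, any `d + 1` endomorphisms
inducing zero on cohomology have zero product. -/
lemma prod_eq_zero {X : DerivedCategory A} (q : ℤ) (d : ℕ) [X.IsGE q] [X.IsLE (q + d)]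
    (L : List (End X)) (hlen : L.length = d + 1)
    (hL : ∀ f ∈ L, ∀ i : ℤ, (homologyFunctor A i).map f = 0) : L.prod = 0 := by
  have h := truncLTι_comp_prod q L hL
  have : IsIso ((t.truncLTι (q + L.length)).app X) :=
    (t.isLE_iff_isIso_truncLTι_app (q + d) (q + L.length) (by rw [hlen]; push_cast; ring) X).1
      inferInstance
  exact (cancel_epi ((t.truncLTι (q + L.length)).app X)).1 (h.trans comp_zero.symm)

end GhostLemma

/-- Let `C` be a bounded complex of `R`-modules whose cohomology vanishes
outside `[q, q + d]`.  If an endomorphism `f` of `C` in the derived category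
induces the zero map on every cohomology module, then `f ^ (d + 1) = 0`.
Consequently, for a commutative ring `T` acting on `C` through endomorphisms
in the derived category, the kernel `I` of `T(C) → End(H^*(C))` satisfies
`I ^ (d + 1) = 0`: any product of `d + 1` endomorphisms coming from `T` and
inducing zero on all cohomology vanishes. -/
theorem stmt_7 (R : Type) [Ring R] [HasDerivedCategory (ModuleCat R)]
    (d : ℕ) (q : ℤ) (C : CochainComplex (ModuleCat R) ℤ)
    (hbdd : ∃ a b : ℤ, ∀ i : ℤ, (i < a ∨ b < i) → Limits.IsZero (C.X i))
    (hH : ∀ i : ℤ, (i < q ∨ q + d < i) → Limits.IsZero (C.homology i)) :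
    (∀ f : End (DerivedCategory.Q.obj C),
      (∀ i : ℤ, (DerivedCategory.homologyFunctor (ModuleCat R) i).map f = 0) →
      f ^ (d + 1) = 0) ∧
    (∀ (T : Type) [CommRing T]
      (φ : T →+* End (DerivedCategory.Q.obj C)) (t : Fin (d + 1) → T),
      (∀ j, ∀ i : ℤ,
        (DerivedCategory.homologyFunctor (ModuleCat R) i).map (φ (t j)) = 0) →
      (List.ofFn (fun j => φ (t j))).prod = 0) := by
  have hz (i : ℤ) (hi : i < q ∨ q + d < i) :
      IsZero ((homologyFunctor (ModuleCat R) i).obj (Q.obj C)) :=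
    (hH i hi).of_iso ((homologyFunctorFactors (ModuleCat R) i).app C)
  have : (Q.obj C).IsGE q := (isGE_iff _ _).2 fun i hi => hz i (Or.inl hi)
  have : (Q.obj C).IsLE (q + d) := (isLE_iff _ _).2 fun i hi => hz i (Or.inr hi)
  refine ⟨fun f hf => ?_, fun T _ φ s hs => ?_⟩
  · rw [← List.prod_replicate]
    refine GhostLemma.prod_eq_zero q d _ (by simp) fun g hg => ?_
    rwa [List.eq_of_mem_replicate hg]
  · refine GhostLemma.prod_eq_zero q d _ (by simp) fun g hg => ?_
    obtain ⟨j, rfl⟩ := List.mem_ofFn.1 hg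
    exact hs j
end

section
/- Let S be a Noetherian commutative ring, q an ideal of S, and C a bounded complex of flat S-modules. Let p be a prime ideal of S containing q, and suppose the set {i : H^i(C)_p ≠ 0} is nonempty with maximum r. Then the natural map induces an isomorphism H^r(C)_p / q·H^r(C)_p ≅ H^r(C ⊗_S S/q)_p. In particular, if H^r(C)_p ≠ 0 and q ⊆ p, then H^r(C ⊗_S S/q)_p ≠ 0 (by Nakayama when H^r(C)_p is finitely generated over the local ring S_p). -/
/-!
Localizing at `p` is tensoring with the flat `S`-module `S_p`, so it commutes with cohomology, and
it suffices to treat `D = C ⊗ S_p`: a bounded above complex of flat modules, exact above `r`.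

For such `D`, descending induction from the upper bound shows that the cokernel of every
differential `D^i → D^{i+1}` with `i ≥ r` is flat (`flat_coker`): by exactness at `i + 1` it is
isomorphic to the image of `D^{i+1} → D^{i+2}`, which is the kernel of the surjection from the flat
module `D^{i+2}` onto the next cokernel (`flat_range`). Hence the target, the image and the cokernel
of `D^r → D^{r+1}` are all flat, so tensoring with an arbitrary module `N` preserves the kernel of
this differential (`rTensor_ker_exact`). Tensoring also preserves cokernels, so it commutes with
the cohomology in degree `r` (`homology_tensor_iso`): `H^r(D) ⊗ N ≅ H^r(D ⊗ N)`. With `N = S/q` and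
`C ⊗ S_p ⊗ S/q ≅ C ⊗ S/q ⊗ S_p` this is the required isomorphism. The nonvanishing is then
Nakayama's lemma over the local ring `S_p` (`nontrivial_quotient`).
-/

open CategoryTheory MonoidalCategory

open scoped TensorProduct

/-- The kernel of a surjection between flat modules is flat: for `N → X` injective, the map
`N ⊗ A → X ⊗ A` is a restriction of `N ⊗ B → X ⊗ B`, because flatness of `P` makes
`N ⊗ A → N ⊗ B` injective. -/
lemma flat_of_exact {R A B P : Type*} [CommRing R] [AddCommGroup A] [AddCommGroup B]
    [AddCommGroup P] [Module R A] [Module R B] [Module R P] [Module.Flat R B] [Module.Flat R P]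
    (f : A →ₗ[R] B) (g : B →ₗ[R] P) (hf : Function.Injective f) (hg : Function.Surjective g)
    (H : Function.Exact f g) : Module.Flat R A := by
  rw [Module.Flat.iff_rTensor_preserves_injective_linearMap]
  intro N X _ _ _ _ j hj
  have h1 : Function.Injective (f.lTensor N) :=
    LinearMap.lTensor_injective_of_exact_of_flat g hg f hf H N
  have h2 : Function.Injective (j.rTensor B) :=
    Module.Flat.rTensor_preserves_injective_linearMap j hj
  have h3 : (f.lTensor X) ∘ₗ (j.rTensor A) = (j.rTensor B) ∘ₗ (f.lTensor N) := by
    rw [LinearMap.lTensor_comp_rTensor, LinearMap.rTensor_comp_lTensor]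
  have h4 : Function.Injective ((f.lTensor X) ∘ₗ (j.rTensor A)) := by
    rw [h3]; exact h2.comp h1
  exact Function.Injective.of_comp h4

lemma flat_range {R B E : Type*} [CommRing R] [AddCommGroup B] [AddCommGroup E]
    [Module R B] [Module R E] (g : B →ₗ[R] E) [Module.Flat R E]
    [Module.Flat R (E ⧸ LinearMap.range g)] : Module.Flat R (LinearMap.range g) :=
  flat_of_exact (LinearMap.range g).subtype (LinearMap.range g).mkQ
    (Submodule.subtype_injective _) (Submodule.mkQ_surjective _)
    (LinearMap.exact_subtype_mkQ _)

/-- If the target and the cokernel of `g` are flat, then tensoring with any module commutes with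
forming the kernel of `g`: both `0 → ker g → B → range g → 0` and
`0 → range g → E → coker g → 0` have a flat right-hand term. -/
lemma rTensor_ker_exact {R B E : Type*} [CommRing R] [AddCommGroup B] [AddCommGroup E]
    [Module R B] [Module R E] (g : B →ₗ[R] E) [Module.Flat R E]
    [Module.Flat R (E ⧸ LinearMap.range g)] (N : Type*) [AddCommGroup N] [Module R N] :
    Function.Injective ((LinearMap.ker g).subtype.rTensor N) ∧
      Function.Exact ((LinearMap.ker g).subtype.rTensor N) (g.rTensor N) := by
  have := flat_range g
  have hex : Function.Exact (LinearMap.ker g).subtype g.rangeRestrict := by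
    rw [LinearMap.exact_iff]; simp
  have h1 := LinearMap.lTensor_injective_of_exact_of_flat g.rangeRestrict
    g.surjective_rangeRestrict (LinearMap.ker g).subtype (Submodule.subtype_injective _) hex N
  have h2 := LinearMap.lTensor_injective_of_exact_of_flat (LinearMap.range g).mkQ
    (Submodule.mkQ_surjective _) (LinearMap.range g).subtype (Submodule.subtype_injective _)
    (LinearMap.exact_subtype_mkQ _) N
  rw [LinearMap.lTensor_inj_iff_rTensor_inj] at h1 h2
  refine ⟨h1, ?_⟩
  have h3 := rTensor_exact N hex g.surjective_rangeRestrict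
  have h4 : g.rTensor N =
      ((LinearMap.range g).subtype.rTensor N) ∘ₗ (g.rangeRestrict.rTensor N) := by
    rw [← LinearMap.rTensor_comp]; rfl
  intro x
  rw [← h3 x, h4, LinearMap.comp_apply, map_eq_zero_iff _ h2]

universe u

variable {S : Type u} [CommRing S]

/-- Categorical form of `rTensor_ker_exact`. -/
lemma preservesKernel_tensorRight {B E : ModuleCat.{u} S} (g : B ⟶ E) [Module.Flat S E]
    [Module.Flat S (E ⧸ LinearMap.range g.hom)] (N : ModuleCat.{u} S) :
    Limits.PreservesLimit (Limits.parallelPair g 0) (tensorRight N) := by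
  obtain ⟨hinj, hex⟩ := rTensor_ker_exact g.hom N
  refine Limits.preservesLimit_of_preserves_limit_cone (ModuleCat.kernelIsLimit g) ?_
  refine (Limits.KernelFork.isLimitMapConeEquiv _ _).symm ?_
  let K : ShortComplex (ModuleCat.{u} S) := ShortComplex.mk
    ((tensorRight N).map (ModuleCat.ofHom (LinearMap.ker g.hom).subtype))
    ((tensorRight N).map g) (by
      rw [← Functor.map_comp]
      convert (tensorRight N).map_zero _ _
      ext x; exact x.2)
  have hK : K.Exact :=
    (ShortComplex.ShortExact.moduleCat_exact_iff_function_exact K).mpr hex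
  have : Mono K.f := (ModuleCat.mono_iff_injective _).mpr hinj
  exact hK.fIsKernel

/-- For a bounded above complex of flat modules that is exact above `r`, all cokernels of the
differentials `d i (i + 1)` with `r ≤ i` are flat, by descending induction: the cokernel at `i`
is isomorphic to the range of the next differential. -/
lemma flat_coker (D : CochainComplex (ModuleCat.{u} S) ℤ) (hflat : ∀ i, Module.Flat S (D.X i))
    (b : ℤ) (hb : ∀ i, b < i → Subsingleton (D.X i)) (r : ℤ)
    (hex : ∀ i, r < i → D.ExactAt i) (i : ℤ) (hi : r ≤ i) :
    Module.Flat S (D.X (i + 1) ⧸ LinearMap.range (D.d i (i + 1)).hom) := by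
  obtain ⟨n, hn⟩ : ∃ n : ℕ, b ≤ i + n := ⟨(b - i).toNat, by lia⟩
  induction n generalizing i with
  | zero =>
    have := hb (i + 1) (by push_cast at hn; lia)
    infer_instance
  | succ n ih =>
    have h1 := ih (i + 1) (by lia) (by push_cast at hn; lia)
    have h2 : Module.Flat S
        (LinearMap.range (D.sc' i (i + 1) (i + 1 + 1)).g.hom) :=
      flat_range (D.d (i + 1) (i + 1 + 1)).hom
    have h3 := (D.exactAt_iff' i (i + 1) (i + 1 + 1) (by simp) (by simp)).mp
      (hex (i + 1) (by lia))
    have h4 := h3.moduleCat_range_eq_ker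
    exact Module.Flat.of_linearEquiv
      ((Submodule.quotEquivOfEq _ _ h4).trans (LinearMap.quotKerEquivRange _))

/-- Tensoring commutes with the homology of `K` if `K.X₃` and the cokernel of `K.g` are flat. -/
lemma homology_tensor_iso (K : ShortComplex (ModuleCat.{u} S)) [Module.Flat S K.X₃]
    [Module.Flat S (K.X₃ ⧸ LinearMap.range K.g.hom)] (N : ModuleCat.{u} S)
    [(K.map (tensorRight N)).HasHomology] :
    Nonempty ((K.map (tensorRight N)).homology ≅ K.homology ⊗ N) := by
  have hk := preservesKernel_tensorRight K.g N
  have : (tensorRight N).PreservesLeftHomologyOf K := ⟨fun h => ⟨hk, inferInstance⟩⟩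
  exact ⟨K.mapHomologyIso (tensorRight N)⟩

/-- Localization as tensoring on the right with the localized ring. -/
noncomputable def localizedEquiv (W : Submonoid S) (M : Type u) [AddCommGroup M] [Module S M] :
    LocalizedModule W M ≃ₗ[S] M ⊗[S] Localization W :=
  ((LocalizedModule.equivTensorProduct W M).restrictScalars S).trans (TensorProduct.comm S _ _)

/-- Base change of a short complex along two modules does not depend on the order. -/
noncomputable def mapTensorSwap (K : ShortComplex (ModuleCat.{u} S)) (M N : ModuleCat.{u} S) :
    (K.map (tensorRight M)).map (tensorRight N) ≅ (K.map (tensorRight N)).map (tensorRight M) :=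
  K.mapNatIso ((tensorRightTensor M N).symm ≪≫ (tensoringRight _).mapIso (β_ M N) ≪≫
    tensorRightTensor N M)

/-- Nakayama's lemma over `S_p`, for an ideal `q ≤ p` of `S`. -/
lemma nontrivial_quotient (p : Ideal S) [p.IsPrime] (q : Ideal S) (hqp : q ≤ p)
    (L : Type*) [AddCommGroup L] [Module S L] [Module (Localization p.primeCompl) L]
    [IsScalarTower S (Localization p.primeCompl) L] [Nontrivial L]
    [Module.Finite (Localization p.primeCompl) L] :
    Nontrivial (L ⧸ (q • (⊤ : Submodule S L))) := by
  rw [Submodule.Quotient.nontrivial_iff]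
  intro htop
  let A := Localization p.primeCompl
  have hle : (⊤ : Submodule A L) ≤ (q.map (algebraMap S A)) • (⊤ : Submodule A L) := by
    have h : q • (⊤ : Submodule S L) ≤
        ((q.map (algebraMap S A)) • (⊤ : Submodule A L)).restrictScalars S := by
      refine Submodule.smul_le.mpr fun a ha x _ => ?_
      rw [Submodule.restrictScalars_mem, ← algebraMap_smul A a x]
      exact Submodule.smul_mem_smul (Ideal.mem_map_of_mem _ ha) trivial
    intro x _
    have hx : x ∈ q • (⊤ : Submodule S L) := by rw [htop]; trivial
    exact h hx
  have hjac : q.map (algebraMap S A) ≤ Ideal.jacobson ⊥ := by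
    rw [IsLocalRing.jacobson_eq_maximalIdeal ⊥ bot_ne_top, Ideal.map_le_iff_le_comap,
      ← Ideal.under_def, Localization.AtPrime.under_maximalIdeal]
    exact hqp
  have := Submodule.eq_bot_of_le_smul_of_le_jacobson_bot _ _ Module.Finite.fg_top hle hjac
  exact top_ne_bot this

/-- Right exactness of the top nonvanishing cohomology under base change.
Let `C` be a bounded complex of flat `S`-modules, `q ⊆ p` ideals with `p`
prime, and suppose `r` is the largest index with `H^r(C)_p ≠ 0`.  Then
`H^r(C)_p / q·H^r(C)_p ≅ H^r(C ⊗_S S/q)_p`; in particular if `H^r(C)_p` is a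
finitely generated module over the local ring `S_p`, then
`H^r(C ⊗_S S/q)_p ≠ 0`. -/
theorem stmt_11 (S : Type) [CommRing S] [IsNoetherianRing S]
    (q : Ideal S) (C : CochainComplex (ModuleCat S) ℤ)
    (hbdd : ∃ a b : ℤ, ∀ i : ℤ, (i < a ∨ b < i) → Limits.IsZero (C.X i))
    (hflat : ∀ i : ℤ, Module.Flat S (C.X i))
    (p : Ideal S) [p.IsPrime] (hqp : q ≤ p) (r : ℤ)
    (hr : Nontrivial (LocalizedModule p.primeCompl (C.homology r)))
    (hmax : ∀ i : ℤ, r < i → Subsingleton (LocalizedModule p.primeCompl (C.homology i))) :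
    Nonempty ((LocalizedModule p.primeCompl (C.homology r) ⧸
        (q • (⊤ : Submodule S (LocalizedModule p.primeCompl (C.homology r))))) ≃ₗ[S]
      LocalizedModule p.primeCompl
        ((((tensorRight (ModuleCat.of S (S ⧸ q))).mapHomologicalComplex
          (ComplexShape.up ℤ)).obj C).homology r)) ∧
    (Module.Finite (Localization p.primeCompl)
        (LocalizedModule p.primeCompl (C.homology r)) →
      Nontrivial (LocalizedModule p.primeCompl
        ((((tensorRight (ModuleCat.of S (S ⧸ q))).mapHomologicalComplex
          (ComplexShape.up ℤ)).obj C).homology r))) := by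
  obtain ⟨a, b, hb⟩ := hbdd
  let A := ModuleCat.of S (Localization p.primeCompl)
  let Q := ModuleCat.of S (S ⧸ q)
  have hA : Module.Flat S A := inferInstanceAs (Module.Flat S (Localization p.primeCompl))
  let D := ((tensorRight A).mapHomologicalComplex (ComplexShape.up ℤ)).obj C
  let eD (i : ℤ) : D.homology i ≅ C.homology i ⊗ A := (C.sc i).mapHomologyIso (tensorRight A)
  have hDflat (i : ℤ) : Module.Flat S (D.X i) := by
    have := hflat i
    exact inferInstanceAs (Module.Flat S (C.X i ⊗[S] Localization p.primeCompl))
  have hDb (i : ℤ) (hi : b < i) : Subsingleton (D.X i) :=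
    ModuleCat.isZero_iff_subsingleton.mp ((tensorRight A).map_isZero (hb i (Or.inr hi)))
  have hDex (i : ℤ) (hi : r < i) : D.ExactAt i := by
    rw [D.exactAt_iff_isZero_homology, ModuleCat.isZero_iff_subsingleton]
    have := hmax i hi
    exact ((localizedEquiv p.primeCompl (C.homology i)).trans
      (eD i).toLinearEquiv.symm).symm.toEquiv.subsingleton
  have hcoker := flat_coker D hDflat b hDb r hDex r le_rfl
  -- `D.sc r` has its third term in degree `next r`; `K` has it in degree `r + 1` on the nose.
  let K := D.sc' (r - 1) r (r + 1)
  let isoK : D.sc r ≅ K := D.isoSc' _ _ _ (by simp) (by simp)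
  have : Module.Flat S K.X₃ := hDflat (r + 1)
  have : Module.Flat S (K.X₃ ⧸ LinearMap.range K.g.hom) := hcoker
  obtain ⟨e₁⟩ := homology_tensor_iso K Q
  let CQ := ((tensorRight Q).mapHomologicalComplex (ComplexShape.up ℤ)).obj C
  -- `H(C ⊗ Q) ⊗ A ≅ H(C ⊗ Q ⊗ A) ≅ H(C ⊗ A ⊗ Q) ≅ H(D) ⊗ Q ≅ H(C) ⊗ A ⊗ Q` in degree `r`.
  let e₂ : CQ.homology r ⊗ A ≅ C.homology r ⊗ A ⊗ Q :=
    (((C.sc r).map (tensorRight Q)).mapHomologyIso (tensorRight A)).symm ≪≫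
      ShortComplex.homologyMapIso (mapTensorSwap (C.sc r) Q A) ≪≫
      ShortComplex.homologyMapIso ((tensorRight Q).mapShortComplex.mapIso isoK) ≪≫ e₁ ≪≫
      (tensorRight Q).mapIso ((ShortComplex.homologyMapIso isoK).symm ≪≫ eD r) ≪≫
      α_ _ _ _
  let L := LocalizedModule p.primeCompl (C.homology r)
  let e₃ : (L ⧸ (q • (⊤ : Submodule S L))) ≃ₗ[S] (C.homology r ⊗[S] Localization p.primeCompl)
      ⊗[S] (S ⧸ q) :=
    (TensorProduct.tensorQuotEquivQuotSMul L q).symm.trans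
      (TensorProduct.congr (localizedEquiv p.primeCompl (C.homology r)) (LinearEquiv.refl S _))
  let e : (L ⧸ (q • (⊤ : Submodule S L))) ≃ₗ[S] LocalizedModule p.primeCompl (CQ.homology r) :=
    e₃.trans ((e₂ ≪≫ (α_ _ _ _).symm).toLinearEquiv.symm.trans
      (localizedEquiv p.primeCompl (CQ.homology r)).symm)
  refine ⟨⟨e⟩, fun hfin => ?_⟩
  have := nontrivial_quotient p q hqp L
  exact e.symm.toEquiv.nontrivial
end

section
/- Let E be a finite extension of Q_ℓ with ring of integers O and finite residue field, and let A be a complete Noetherian local O-algebra whose residue field is finite over the residue field of O. Then for every maximal ideal p of A[1/ℓ], the quotient A[1/ℓ]/p is a finite field extension of E, and the image of A in A[1/ℓ]/p is a finite free O-module (hence an order in A[1/ℓ]/p). -/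
/-!
Let `p` be the contraction of `P` to `A` and `B = A ⧸ p`, a Noetherian local domain with finite
residue field whose localization `B[1/ℓ]` is the field `A[1/ℓ] ⧸ P`.

The crux is that `B` is finite over `ℤ_[ℓ]`. As `B[1/ℓ]` is a field, every nonzero prime of `B`
contains `ℓ`, and by Krull's principal ideal theorem together with prime avoidance the maximal
ideal is then the only prime containing `ℓ` (`eq_maximalIdeal_of_mem`). So `(ℓ)` contains a power
of the maximal ideal and `B ⧸ (ℓ)` is finite (`finite_quotient_span`). Since `ℤ_[ℓ]` is complete
and `B` is `ℓ`-adically separated, combinations of lifts of the elements of `B ⧸ (ℓ)` exhaust `B`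
(`finite_padicInt`).

The map `O → B` is injective because `O` is integral over `ℤ_[ℓ]` and `ℓ ≠ 0` in `B`. Hence `O`, a
`ℤ_[ℓ]`-submodule of `B`, is itself finite over `ℤ_[ℓ]`, so it is a local Dedekind domain, that is
a principal ideal domain (`isPrincipalIdealRing_of_finite`), and `B`, being finite and torsion-free
over `O`, is free. Finally `E = Frac O` maps to `A[1/ℓ] ⧸ P`, which is spanned over `E` by any
generators of `B` over `O`, because each of its elements has the form `b / ℓ ^ n` with `b` in `B`.
-/

open IsLocalRing

theorem isPrecomplete_pi_padicInt (ℓ : ℕ) [Fact (Nat.Prime ℓ)] (ι : Type*) [Finite ι] :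
    IsPrecomplete (maximalIdeal ℤ_[ℓ]) (ι → ℤ_[ℓ]) where
  prec' f hf := by
    have hcoord (i : ι) : ∃ L : ℤ_[ℓ], ∀ n,
        f n i ≡ L [SMOD (maximalIdeal ℤ_[ℓ] ^ n • ⊤ : Ideal ℤ_[ℓ])] := by
      refine IsPrecomplete.prec inferInstance fun {m n} hmn ↦ ?_
      refine ((hf hmn).map (LinearMap.proj i)).mono ?_
      rw [Submodule.map_smul'']
      exact Submodule.smul_mono le_rfl le_top
    choose L hL using hcoord
    refine ⟨L, fun n ↦ ?_⟩
    have hdvd (i : ι) : ∃ c, f n i - L i = (ℓ : ℤ_[ℓ]) ^ n * c := by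
      have h := hL i n
      rwa [SModEq.sub_mem, smul_eq_mul, Ideal.mul_top, PadicInt.maximalIdeal_eq_span_p,
        Ideal.span_singleton_pow, Ideal.mem_span_singleton] at h
    choose c hc using hdvd
    have hfc : f n - L = (ℓ : ℤ_[ℓ]) ^ n • c := funext hc
    rw [SModEq.sub_mem, hfc]
    refine Submodule.smul_mem_smul (Ideal.pow_mem_pow ?_ n) trivial
    rw [PadicInt.maximalIdeal_eq_span_p]
    exact Ideal.mem_span_singleton_self _

/-- A Noetherian local domain in which all nonzero primes contain a fixed `t ≠ 0` has dimension at
most one: otherwise prime avoidance gives `x` in the maximal ideal lying in no minimal prime of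
`(t)`, while a minimal prime of `(x)` has height at most one and so is a minimal prime of `(t)`. -/
theorem eq_maximalIdeal_of_mem {B : Type*} [CommRing B] [IsDomain B] [IsNoetherianRing B]
    [IsLocalRing B] {t : B} (ht : t ≠ 0)
    (hprime : ∀ q : Ideal B, q.IsPrime → q ≠ ⊥ → t ∈ q)
    {q : Ideal B} (hq : q.IsPrime) (htq : t ∈ q) : q = maximalIdeal B := by
  set S : Set (Ideal B) := (Ideal.span {t}).minimalPrimes with hS
  have hfin : S.Finite := Ideal.finite_minimalPrimes_of_isNoetherianRing B _
  have hcover : (maximalIdeal B : Set B) ⊆ ⋃ p ∈ S, (id p : Ideal B) := by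
    intro x hx
    by_cases hx0 : x = 0
    · obtain ⟨p, hp, -⟩ :=
        Ideal.exists_minimalPrimes_le ((Ideal.span_singleton_le_iff_mem q).2 htq)
      exact Set.mem_biUnion hp (by simp [hx0])
    obtain ⟨r, hr, -⟩ := Ideal.exists_minimalPrimes_le
      ((Ideal.span_singleton_le_iff_mem (maximalIdeal B)).2 hx)
    have hrp : r.IsPrime := hr.isPrime
    have hxr : x ∈ r := hr.le (Ideal.mem_span_singleton_self x)
    have htr : t ∈ r := hprime r hrp fun h ↦ hx0 (by simpa [h] using hxr)
    obtain ⟨p, hp, hpr⟩ := Ideal.exists_minimalPrimes_le ((Ideal.span_singleton_le_iff_mem r).2 htr)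
    have hpp : p.IsPrime := hp.isPrime
    have hp0 : ⊥ < p := bot_lt_iff_ne_bot.2 fun h ↦
      ht (by simpa [h] using hp.le (Ideal.mem_span_singleton_self t))
    -- By Krull, `r` has height at most one, so `⊥ < p < r` is impossible.
    have hheight : r.height ≤ 1 :=
      Ideal.height_le_one_of_isPrincipal_of_mem_minimalPrimes (Ideal.span {x}) r hr
    have hpr' : p = r := by
      by_contra hne
      have h1 := Ideal.height_add_one_le_of_lt_of_isPrime (lt_of_le_of_ne hpr hne)
      have h0 := Ideal.height_add_one_le_of_lt_of_isPrime hp0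
      rw [Ideal.height_bot, zero_add] at h0
      have h2 := (add_le_add_left h0 1).trans (h1.trans hheight)
      norm_num at h2
    exact Set.mem_biUnion hp (hpr' ▸ hxr)
  obtain ⟨p, hp, hmp⟩ := (Ideal.subset_union_prime_finite hfin (f := id) ⊥ ⊥
    fun p hp _ _ ↦ hp.isPrime).1 hcover
  have hpm : p = maximalIdeal B := (le_maximalIdeal hp.isPrime.ne_top).antisymm hmp
  refine (le_maximalIdeal hq.ne_top).antisymm ?_
  rw [← hpm]
  exact hp.2 ⟨hq, (Ideal.span_singleton_le_iff_mem q).2 htq⟩ (hpm ▸ le_maximalIdeal hq.ne_top)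

theorem finite_quotient_span {B : Type*} [CommRing B] [IsDomain B] [IsNoetherianRing B]
    [IsLocalRing B] [Finite (ResidueField B)] {t : B} (ht : t ≠ 0)
    (hprime : ∀ q : Ideal B, q.IsPrime → q ≠ ⊥ → t ∈ q) : Finite (B ⧸ Ideal.span {t}) := by
  have hrad : maximalIdeal B ≤ (Ideal.span {t}).radical := by
    rw [Ideal.radical_eq_sInf]
    refine le_sInf fun q hq ↦ (eq_maximalIdeal_of_mem ht hprime hq.2 ?_).ge
    exact hq.1 (Ideal.mem_span_singleton_self t)
  obtain ⟨n, hn⟩ := Ideal.exists_pow_le_of_le_radical_of_fg hrad (IsNoetherian.noetherian _)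
  have : Finite (B ⧸ maximalIdeal B) := ‹Finite (ResidueField B)›
  have := Ideal.finite_quotient_pow (IsNoetherian.noetherian (maximalIdeal B)) n
  exact Finite.of_surjective _ (Ideal.Quotient.factor_surjective hn)

/-- Nakayama's lemma over the complete ring `ℤ_[ℓ]`: only finiteness modulo `ℓ` and `ℓ`-adic
separatedness of `B` are needed, the latter being Krull's intersection theorem. -/
theorem finite_padicInt (ℓ : ℕ) [Fact (Nat.Prime ℓ)] {B : Type*} [CommRing B] [IsNoetherianRing B]
    [IsLocalRing B] [Algebra ℤ_[ℓ] B] (hℓ : (ℓ : B) ∈ maximalIdeal B)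
    [Finite (B ⧸ Ideal.span {(ℓ : B)})] : Module.Finite ℤ_[ℓ] B := by
  have hmap : (maximalIdeal ℤ_[ℓ]).map (algebraMap ℤ_[ℓ] B) = Ideal.span {(ℓ : B)} := by
    rw [PadicInt.maximalIdeal_eq_span_p, Ideal.map_span, Set.image_singleton, map_natCast]
  have hne : Ideal.span {(ℓ : B)} ≠ ⊤ := fun h ↦
    (Ideal.span_singleton_le_iff_mem _).2 hℓ |>.trans_lt
      (lt_top_iff_ne_top.2 (maximalIdeal.isMaximal B).ne_top) |>.ne h
  have hhaus : IsHausdorff (maximalIdeal ℤ_[ℓ]) B := by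
    rw [← IsHausdorff.map_algebraMap_iff (S := B), hmap]
    exact IsHausdorff.of_isLocalRing _ _ hne
  let Q := B ⧸ Ideal.span {(ℓ : B)}
  have := Fintype.ofFinite Q
  have := isPrecomplete_pi_padicInt ℓ Q
  -- The combinations of lifts of all elements of `B ⧸ (ℓ)`.
  let f : (Q → ℤ_[ℓ]) →ₗ[ℤ_[ℓ]] B := Fintype.linearCombination ℤ_[ℓ] (Quotient.out : Q → B)
  refine Module.Finite.of_surjective f ?_
  refine surjective_of_mkQ_comp_surjective (I := maximalIdeal ℤ_[ℓ]) fun y ↦ ?_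
  obtain ⟨b, rfl⟩ := Submodule.mkQ_surjective _ y
  classical
  refine ⟨Pi.single (Ideal.Quotient.mk _ b) 1, ?_⟩
  have hfb : f (Pi.single (Ideal.Quotient.mk _ b) 1) = (Ideal.Quotient.mk _ b : Q).out := by
    simp [f, Fintype.linearCombination_apply_single]
  rw [LinearMap.comp_apply, hfb, Submodule.mkQ_apply, Submodule.mkQ_apply, Submodule.Quotient.eq,
    Ideal.smul_top_eq_map, hmap, Submodule.restrictScalars_mem, ← Ideal.Quotient.eq]
  exact Quotient.out_eq _

/-- An integral closure that is local and finite over the base PID is a local Dedekind domain. -/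
theorem isPrincipalIdealRing_of_finite (R O E : Type*) [CommRing R] [IsDomain R]
    [IsPrincipalIdealRing R] [CommRing O] [IsLocalRing O] [Field E] [Algebra R O] [Algebra O E]
    [Algebra R E] [IsScalarTower R O E] [IsIntegralClosure O R E] [IsFractionRing O E]
    [Module.Finite R O] : IsPrincipalIdealRing O := by
  have : IsDomain O := (IsFractionRing.injective O E).isDomain _
  have : IsNoetherianRing O := IsNoetherianRing.of_finite R O
  have : Ring.DimensionLEOne O := .of_isIntegral R O
  have hcl : IsIntegrallyClosedIn O E := IsIntegrallyClosedIn.of_isIntegralClosure R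
  have : IsIntegrallyClosed O := (isIntegrallyClosed_iff_isIntegrallyClosedIn E).2 hcl
  have : IsDedekindDomain O := {}
  refine IsPrincipalIdealRing.of_finite_maximals ((Set.finite_singleton (maximalIdeal O)).subset ?_)
  exact fun I hI ↦ eq_maximalIdeal hI

/-- Let `E` be a finite extension of `ℚ_ℓ` with ring of integers `O` (the
integral closure of `ℤ_ℓ`, a local ring with finite residue field, with
fraction field `E`), and let `A` be a complete Noetherian local `O`-algebra
whose residue field is finite (i.e. finite over the residue field of `O`).
Then for every maximal ideal `P` of `A[1/ℓ]`: the quotient `A[1/ℓ]/P` is a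
finite field extension of `E` (compatibly with the maps from `O`), and the
image of `A` in `A[1/ℓ]/P` is a finite free `O`-module, hence an order in
`A[1/ℓ]/P`. -/
theorem stmt_13 (ℓ : ℕ) [Fact (Nat.Prime ℓ)]
    (E : Type) [Field E] [Algebra ℚ_[ℓ] E] [FiniteDimensional ℚ_[ℓ] E]
    (O : Type) [CommRing O] [Algebra ℤ_[ℓ] O] [Algebra O E] [Algebra ℤ_[ℓ] E]
    [IsScalarTower ℤ_[ℓ] O E] [IsIntegralClosure O ℤ_[ℓ] E] [IsFractionRing O E]
    [IsLocalRing O] [Finite (IsLocalRing.ResidueField O)]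
    (A : Type) [CommRing A] [IsNoetherianRing A] [IsLocalRing A]
    [Algebra O A] (hloc : IsLocalHom (algebraMap O A))
    (hcomp : IsAdicComplete (IsLocalRing.maximalIdeal A) A)
    [Finite (IsLocalRing.ResidueField A)]
    (P : Ideal (Localization.Away ((ℓ : A)))) (hP : P.IsMaximal) :
    (∃ f : E →+* (Localization.Away ((ℓ : A)) ⧸ P),
      (∀ x : O, f (algebraMap O E x) =
        Ideal.Quotient.mk P (algebraMap A (Localization.Away ((ℓ : A))) (algebraMap O A x))) ∧
      letI : Module E (Localization.Away ((ℓ : A)) ⧸ P) := Module.compHom _ f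
      Module.Finite E (Localization.Away ((ℓ : A)) ⧸ P)) ∧
    Module.Finite O (A ⧸ P.comap (algebraMap A (Localization.Away ((ℓ : A))))) ∧
    Module.Free O (A ⧸ P.comap (algebraMap A (Localization.Away ((ℓ : A))))) := by
  have hOE : Function.Injective (algebraMap O E) := IsFractionRing.injective O E
  have : IsDomain O := hOE.isDomain _
  have : CharZero E := charZero_of_injective_algebraMap (algebraMap ℚ_[ℓ] E).injective
  have hℓE : (ℓ : E) ≠ 0 := Nat.cast_ne_zero.2 (Fact.out : ℓ.Prime).ne_zero
  have hint : Algebra.IsIntegral ℤ_[ℓ] O := IsIntegralClosure.isIntegral_algebra ℤ_[ℓ] E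
  -- A nonzero `ℓ`-adic integer is a unit times a power of `ℓ`, and `ℓ` is nonzero in a field.
  have hker {K : Type} [Field K] (hℓK : (ℓ : K) ≠ 0) (φ : ℤ_[ℓ] →+* K) :
      Function.Injective φ := by
    refine (injective_iff_map_eq_zero φ).2 fun z hz ↦ ?_
    by_contra hz0
    rw [PadicInt.unitCoeff_spec hz0, map_mul, map_pow, map_natCast] at hz
    exact mul_ne_zero ((PadicInt.unitCoeff hz0).isUnit.map φ).ne_zero (pow_ne_zero _ hℓK) hz
  set L := Localization.Away (ℓ : A) with hL
  let : Field (L ⧸ P) := Ideal.Quotient.field P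
  set p : Ideal A := P.comap (algebraMap A L) with hp
  have hpp : p.IsPrime := Ideal.comap_isPrime _ _
  let B := A ⧸ p
  -- The embedding of `B` in the field `A[1/ℓ]/P`.
  let ι : B →+* L ⧸ P := Ideal.quotientMap P (algebraMap A L) le_rfl
  have hι : Function.Injective ι := Ideal.quotientMap_injective
  have hιmk (a : A) : ι (Ideal.Quotient.mk p a) = Ideal.Quotient.mk P (algebraMap A L a) := rfl
  have hℓL : IsUnit (ℓ : L) := by
    simpa using IsLocalization.Away.algebraMap_isUnit (S := L) (ℓ : A)
  have hℓK : (ℓ : L ⧸ P) ≠ 0 := by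
    simpa using (hℓL.map (Ideal.Quotient.mk P)).ne_zero
  have hfrac (y : L ⧸ P) : ∃ (b : B) (n : ℕ), y * (ℓ : L ⧸ P) ^ n = ι b := by
    obtain ⟨x, rfl⟩ := Ideal.Quotient.mk_surjective y
    obtain ⟨n, a, hna⟩ := IsLocalization.Away.surj (ℓ : A) x
    exact ⟨Ideal.Quotient.mk p a, n, by simpa [hιmk] using congrArg (Ideal.Quotient.mk P) hna⟩
  have hℓB : (ℓ : B) ≠ 0 := fun h ↦ hℓK (by simpa using congrArg ι h)
  have hprime (q : Ideal B) (hq : q.IsPrime) (hq0 : q ≠ ⊥) : (ℓ : B) ∈ q := by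
    obtain ⟨x, hxq, hx0⟩ := Submodule.exists_mem_ne_zero_of_ne_bot hq0
    obtain ⟨b, n, hbn⟩ := hfrac (ι x)⁻¹
    have hxb : x * b = (ℓ : B) ^ n := hι <| by
      rw [map_mul, ← hbn, mul_inv_cancel_left₀ ((map_ne_zero_iff ι hι).2 hx0), map_pow, map_natCast]
    exact hq.mem_of_pow_mem n (hxb ▸ q.mul_mem_right b hxq)
  have hBloc : IsLocalRing B :=
    .of_surjective' (Ideal.Quotient.mk p) Ideal.Quotient.mk_surjective
  have hmkloc : IsLocalHom (Ideal.Quotient.mk p) :=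
    .of_surjective _ Ideal.Quotient.mk_surjective
  have : Finite (ResidueField B) := by
    refine Finite.of_surjective (ResidueField.map (Ideal.Quotient.mk p)) fun y ↦ ?_
    obtain ⟨b, rfl⟩ := residue_surjective y
    obtain ⟨a, rfl⟩ := Ideal.Quotient.mk_surjective b
    exact ⟨residue A a, ResidueField.map_residue _ a⟩
  -- If `ℓ` were a unit in `B`, it would be one in `A`, in `O` and in `ℤ_[ℓ]`, as all the maps
  -- `ℤ_[ℓ] → O → A → B` are local.
  have hℓm : (ℓ : B) ∈ maximalIdeal B := by
    rw [mem_maximalIdeal, mem_nonunits_iff]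
    intro hu
    have hu' : IsUnit (ℓ : O) := by
      refine isUnit_of_map_unit (algebraMap O A) _ ?_
      refine isUnit_of_map_unit (Ideal.Quotient.mk p) _ ?_
      simpa using hu
    have hinjO : Function.Injective (algebraMap ℤ_[ℓ] O) := by
      refine Function.Injective.of_comp (f := algebraMap O E) ?_
      rw [← RingHom.coe_comp]
      exact hker hℓE _
    have : IsLocalHom (algebraMap ℤ_[ℓ] O) := 
      (algebraMap_isIntegral_iff.mpr hint).isLocalHom hinjO
    have hu'' : IsUnit (ℓ : ℤ_[ℓ]) := isUnit_of_map_unit (algebraMap ℤ_[ℓ] O) _ (by simpa using hu')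
    exact PadicInt.prime_p.not_isUnit hu''
  let : Algebra ℤ_[ℓ] B := ((algebraMap O B).comp (algebraMap ℤ_[ℓ] O)).toAlgebra
  have : IsScalarTower ℤ_[ℓ] O B := .of_algebraMap_eq fun _ ↦ rfl
  have := finite_quotient_span hℓB hprime
  have hfin : Module.Finite ℤ_[ℓ] B := finite_padicInt ℓ hℓm
  -- `O` is integral over `ℤ_ℓ`, so an ideal of `O` that is zero on `ℤ_ℓ` is zero.
  have hOK : Function.Injective (ι.comp (algebraMap O B)) := by
    rw [RingHom.injective_iff_ker_eq_bot]
    refine Ideal.eq_bot_of_comap_eq_bot (R := ℤ_[ℓ]) ?_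
    rw [RingHom.comap_ker, ← RingHom.injective_iff_ker_eq_bot]
    exact hker hℓK _
  have hOB : Function.Injective (algebraMap O B) := by
    rw [RingHom.coe_comp] at hOK
    exact hOK.of_comp
  have : Module.Finite ℤ_[ℓ] O :=
    Module.Finite.of_injective (IsScalarTower.toAlgHom ℤ_[ℓ] O B).toLinearMap hOB
  have : IsPrincipalIdealRing O := isPrincipalIdealRing_of_finite ℤ_[ℓ] O E
  have hfinO : Module.Finite O B := Module.Finite.of_restrictScalars_finite ℤ_[ℓ] O B
  have : FaithfulSMul O B := (faithfulSMul_iff_algebraMap_injective O B).2 hOB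
  have : Module.IsTorsionFree O B := inferInstance
  refine ⟨⟨IsFractionRing.lift hOK, fun x ↦ IsFractionRing.lift_algebraMap hOK x, ?_⟩, hfinO,
    Module.free_of_finite_type_torsion_free'⟩
  set f : E →+* L ⧸ P := IsFractionRing.lift hOK with hf
  let : Module E (L ⧸ P) := Module.compHom _ f
  have hsmul (e : E) (y : L ⧸ P) : e • y = f e * y := rfl
  obtain ⟨s, hs⟩ := hfinO.fg_top
  classical
  refine ⟨s.image ι, eq_top_iff.2 fun y _ ↦ ?_⟩
  have hspan (b : B) : ι b ∈ Submodule.span E ((s.image ι : Finset (L ⧸ P)) : Set (L ⧸ P)) := by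
    have hb : b ∈ Submodule.span O (s : Set B) := hs ▸ Submodule.mem_top
    induction hb using Submodule.span_induction with
    | mem x hx => exact Submodule.subset_span (by simpa using ⟨x, hx, rfl⟩)
    | zero => simp
    | add x y _ _ hx hy => rw [map_add]; exact add_mem hx hy
    | smul c x _ hx =>
      have hc : ι (c • x) = algebraMap O E c • ι x := by
        rw [hsmul, Algebra.smul_def, map_mul, hf, IsFractionRing.lift_algebraMap]
        rfl
      rw [hc]
      exact Submodule.smul_mem _ _ hx
  obtain ⟨b, n, hbn⟩ := hfrac y
  have hy : y = ((ℓ : E) ^ n)⁻¹ • ι b := by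
    rw [hsmul, ← hbn, map_inv₀, map_pow, map_natCast, mul_comm y,
      inv_mul_cancel_left₀ (pow_ne_zero n hℓK)]
  rw [hy]
  exact Submodule.smul_mem _ _ (hspan b)
end
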